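/- Let (X,d,H¹) be a metric graph equipped with the one-dimensional Hausdorff measure, satisfying BG(k,n) with constant C for some k ∈ ℝ, n ≥ 1, C ≥ 1. Then for every vertex x of X (interior local cut point), deg(x) ≤ C + 1. -/

import Mathlib

open Metric MeasureTheory Set Filter Topology
open scoped ENNReal NNReal

noncomputable def genSin (k t : ℝ) : ℝ :=
  if 0 < k then Real.sin (Real.sqrt k * t) / Real.sqrt k
  else if k = 0 then t
  else Real.sinh (Real.sqrt (-k) * t) / Real.sqrt (-k)

/-- `V_{k,n}(r₁,r₂)`, the volume of an annulus in the model space. -/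
noncomputable def Vkn (k n r₁ r₂ : ℝ) : ℝ :=
  (2 * Real.pi ^ (n / 2) / Real.Gamma (n / 2)) * ∫ t in r₁..r₂, genSin k t ^ (n - 1)

def IsLengthSpace (X : Type*) [MetricSpace X] : Prop :=
  ∀ x y : X, ∀ ε > 0, ∃ z : X, max (dist x z) (dist z y) ≤ dist x y / 2 + ε

variable {X : Type*} [MetricSpace X]

/-- The open annulus `A_{r₁,r₂}(x) = B_{r₂}(x) \ closure (B_{r₁}(x))`. -/
def ann (x : X) (r₁ r₂ : ℝ) : Set X := Metric.ball x r₂ \ closure (Metric.ball x r₁)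

/-- `S_{s₁,s₂}(x,U)`: points of the annulus `A_{s₁,s₂}(x)` lying on a minimal geodesic
from `x` to some point of `U`. -/
def geodSlice (x : X) (s₁ s₂ : ℝ) (U : Set X) : Set X :=
  {y | y ∈ ann x s₁ s₂ ∧ ∃ z ∈ U, dist x y + dist y z = dist x z}

/-- The generalized Bishop–Gromov inequality `BG(k,n)` with constant `C`. -/
def SatisfiesBG [MeasurableSpace X] (μ : Measure X) (k n C : ℝ) : Prop :=
  ∀ (x : X) (r₁ r₂ s₁ s₂ : ℝ), 0 ≤ s₁ → s₁ < s₂ → s₁ ≤ r₁ → r₁ < r₂ → s₂ ≤ r₂ →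
    ∀ U : Set X, MeasurableSet U → U ⊆ ann x r₁ r₂ →
      μ U * ENNReal.ofReal (Vkn k n s₁ s₂) ≤
        ENNReal.ofReal C * μ (geodSlice x s₁ s₂ U) * ENNReal.ofReal (Vkn k n r₁ r₂)

/-- A local cut point. -/
def IsLocalCutPoint (x : X) : Prop :=
  ∃ U : Set X, U ∈ 𝓝 x ∧ IsConnected U ∧ ¬ IsPreconnected (U \ {x})

/-- The degree of a point: supremum over connected neighborhoods `U` of `x` of the
number of connected components of `U \ {x}`. -/
noncomputable def degree (x : X) : ℕ∞ :=
  ⨆ U : {U : Set X // U ∈ 𝓝 x ∧ IsConnected U},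
    ENat.card (ConnectedComponents ↥(U.1 \ {x}))


/-- A (local description of a) metric graph: around every point `x` there is a radius
`ε` such that `B_ε(x) \ {x}` has finitely many connected components, on each of which
the distance to `x` is an isometry onto the interval `(0,ε)`. -/
def IsMetricGraph (X : Type*) [MetricSpace X] : Prop :=
  ∀ x : X, ∃ ε > 0,
    {S : Set X | ∃ y ∈ Metric.ball x ε \ {x},
        S = connectedComponentIn (Metric.ball x ε \ {x}) y}.Finite ∧
    ∀ y ∈ Metric.ball x ε \ {x},
      (∀ z ∈ connectedComponentIn (Metric.ball x ε \ {x}) y,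
        ∀ w ∈ connectedComponentIn (Metric.ball x ε \ {x}) y,
          dist z w = |dist x z - dist x w|) ∧
      ∀ t : ℝ, 0 < t → t < ε →
        ∃ z ∈ connectedComponentIn (Metric.ball x ε \ {x}) y, dist x z = t

structure GStar (x : X) (ε : ℝ) (T : Finset (Set X)) : Prop where
  pos : 0 < ε
  cover : ∀ y, dist x y < ε → y ≠ x → ∃ S ∈ T, y ∈ S
  sub : ∀ S ∈ T, ∀ y ∈ S, dist x y < ε ∧ y ≠ x
  disj : ∀ S ∈ T, ∀ S' ∈ T, S ≠ S' → Disjoint S S'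
  opn : ∀ S ∈ T, IsOpen S
  iso : ∀ S ∈ T, ∀ z ∈ S, ∀ w ∈ S, dist z w = |dist x z - dist x w|
  surj : ∀ S ∈ T, ∀ t : ℝ, 0 < t → t < ε → ∃ z ∈ S, dist x z = t

theorem exists_star (h : IsMetricGraph X) (x : X) : ∃ ε T, GStar x ε T := by
  obtain ⟨ε, hε, hfin, hrest⟩ := h x
  set F : Set X := Metric.ball x ε \ {x} with hF
  have hFo : IsOpen F := Metric.isOpen_ball.sdiff isClosed_singleton
  have hmem : ∀ S, S ∈ hfin.toFinset ↔ ∃ y ∈ F, S = connectedComponentIn F y := by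
    intro S; simp [hF]
  have hdisj : ∀ S ∈ hfin.toFinset, ∀ S' ∈ hfin.toFinset, S ≠ S' → Disjoint S S' := by
    intro S hS S' hS' hne
    obtain ⟨y, hy, rfl⟩ := (hmem S).1 hS
    obtain ⟨y', hy', rfl⟩ := (hmem S').1 hS'
    rw [Set.disjoint_left]
    intro z hz hz'
    exact hne ((connectedComponentIn_eq hz).trans (connectedComponentIn_eq hz').symm)
  have hsubF : ∀ S ∈ hfin.toFinset, S ⊆ F := by
    intro S hS
    obtain ⟨y, hy, rfl⟩ := (hmem S).1 hS
    exact connectedComponentIn_subset _ _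
  have hcov : ∀ y ∈ F, ∃ S ∈ hfin.toFinset, y ∈ S := fun y hy =>
    ⟨_, (hmem _).2 ⟨y, hy, rfl⟩, mem_connectedComponentIn hy⟩
  refine ⟨ε, hfin.toFinset, hε, ?_, ?_, hdisj, ?_, ?_, ?_⟩
  · intro y h1 h2
    exact hcov y ⟨by rwa [Metric.mem_ball, dist_comm], h2⟩
  · intro S hS y hy
    have := hsubF S hS hy
    exact ⟨by simpa [dist_comm] using this.1, this.2⟩
  · intro S hS
    have : S = F ∩ ⋂ S' ∈ hfin.toFinset.erase S, (closure S')ᶜ := by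
      ext z
      constructor
      · intro hz
        refine ⟨hsubF S hS hz, ?_⟩
        simp only [Set.mem_iInter]
        intro S' hS' hzc
        rw [Finset.mem_erase] at hS'
        have hd := hdisj S hS S' hS'.2 hS'.1.symm
        apply Set.disjoint_left.1 hd hz
        obtain ⟨y', hy', rfl⟩ := (hmem S').1 hS'.2
        have hp : IsPreconnected (insert z (connectedComponentIn F y')) :=
          isPreconnected_connectedComponentIn.subset_closure (Set.subset_insert _ _)
            (Set.insert_subset hzc subset_closure)
        have := hp.subset_connectedComponentIn (Set.mem_insert_of_mem _ (mem_connectedComponentIn hy'))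
          (Set.insert_subset (hsubF S hS hz) (connectedComponentIn_subset _ _))
        exact this (Set.mem_insert _ _)
      · rintro ⟨hzF, hz⟩
        simp only [Set.mem_iInter] at hz
        obtain ⟨S', hS', hzS'⟩ := hcov z hzF
        by_cases hc : S' = S
        · exact hc ▸ hzS'
        · exact absurd (subset_closure hzS') (hz S' (Finset.mem_erase.2 ⟨hc, hS'⟩))
    rw [this]
    apply hFo.inter
    exact isOpen_biInter_finset (fun _ _ => isClosed_closure.isOpen_compl)
  · intro S hS
    obtain ⟨y, hy, rfl⟩ := (hmem S).1 hS
    exact (hrest y hy).1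
  · intro S hS
    obtain ⟨y, hy, rfl⟩ := (hmem S).1 hS
    exact (hrest y hy).2

theorem GStar.param {x : X} {ε : ℝ} {T : Finset (Set X)} (h : GStar x ε T) {S : Set X}
    (hS : S ∈ T) : ∃ f : ℝ → X, f 0 = x ∧ (∀ t, 0 < t → t < ε → f t ∈ S) ∧
      (∀ t, 0 ≤ t → t < ε → dist x (f t) = t) ∧
      (∀ y ∈ S, f (dist x y) = y) ∧
      (∀ s ∈ Set.Ico 0 ε, ∀ t ∈ Set.Ico 0 ε, dist (f s) (f t) = dist s t) ∧
      ContinuousOn f (Set.Ico 0 ε) := by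
  classical
  have := h.surj S hS
  choose g hg hgd using this
  let f : ℝ → X := fun t => if ht : 0 < t ∧ t < ε then g t ht.1 ht.2 else x
  have f0 : f 0 = x := by simp [f]
  have fS : ∀ t, 0 < t → t < ε → f t ∈ S := by
    intro t h1 h2
    simp only [f, h1, h2, and_self, dif_pos]
    exact hg _ _ _
  have fd : ∀ t, 0 ≤ t → t < ε → dist x (f t) = t := by
    intro t h1 h2
    rcases h1.eq_or_lt with rfl | h1
    · simp [f0]
    · simp only [f, h1, h2, and_self, dif_pos]
      exact hgd _ _ _
  have fi : ∀ s ∈ Set.Ico 0 ε, ∀ t ∈ Set.Ico 0 ε, dist (f s) (f t) = dist s t := by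
    rintro s ⟨s0, s1⟩ t ⟨t0, t1⟩
    rcases s0.eq_or_lt with rfl | s0
    · rw [f0, fd t t0 t1, Real.dist_eq, zero_sub, abs_neg, abs_of_nonneg t0]
    rcases t0.eq_or_lt with rfl | t0
    · rw [f0, dist_comm, fd s s0.le s1, Real.dist_eq, sub_zero, abs_of_nonneg s0.le]
    rw [h.iso S hS _ (fS s s0 s1) _ (fS t t0 t1), fd s s0.le s1, fd t t0.le t1, Real.dist_eq]
  refine ⟨f, f0, fS, fd, ?_, fi, ?_⟩
  · intro y hy
    have hy' := h.sub S hS y hy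
    have hp : 0 < dist x y := dist_pos.2 hy'.2.symm
    rw [← dist_eq_zero, h.iso S hS _ (fS _ hp hy'.1) _ hy, fd _ hp.le hy'.1]
    simp
  · have : LipschitzOnWith 1 f (Set.Ico 0 ε) := by
      apply LipschitzOnWith.of_dist_le_mul
      intro s hs t ht
      simp [fi s hs t ht]
    exact this.continuousOn

theorem GStar.dichotomy {p : X} {ε : ℝ} {T : Finset (Set X)} (h : GStar p ε T) {S : Set X}
    (hS : S ∈ T) {U : Set X} (hU : IsPreconnected U) (hp : p ∈ U) :
    ∃ a > 0, (∀ y ∈ S, dist p y < a → y ∈ U) ∨ (∀ y ∈ S, dist p y < a → y ∉ U) := by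
  obtain ⟨f, f0, fS, fd, fy, fi, fc⟩ := h.param hS
  have key : ∀ a b t, 0 < a → a < t → t < b → b < ε → f a ∉ U → f b ∉ U → f t ∉ U := by
    intro a b t ha hat htb hb hfa hfb hft
    have hV2 : IsOpen (f '' Set.Icc a b)ᶜ := by
      refine (IsCompact.isClosed ?_).isOpen_compl
      apply isCompact_Icc.image_of_continuousOn
      exact fc.mono (fun s hs => ⟨ha.le.trans hs.1, hs.2.trans_lt hb⟩)
    have hV1 : IsOpen (S ∩ {y | a < dist p y} ∩ {y | dist p y < b}) :=
      ((h.opn S hS).inter (isOpen_lt (by fun_prop) (by fun_prop))).inter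
        (isOpen_lt (by fun_prop) (by fun_prop))
    obtain ⟨y, hyU, hy1, hy2⟩ := hU _ _ hV1 hV2 (by
      intro y hy
      by_cases hyf : y ∈ f '' Set.Icc a b
      · left
        obtain ⟨s, hs, rfl⟩ := hyf
        have h1 : a ≠ s := by rintro rfl; exact hfa hy
        have h2 : s ≠ b := by rintro rfl; exact hfb hy
        have h1 := lt_of_le_of_ne hs.1 h1
        have h2 := lt_of_le_of_ne hs.2 h2
        have := fd s (by linarith) (by linarith)
        exact ⟨⟨fS s (by linarith) (by linarith), by simpa [this]⟩, by simpa [this]⟩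
      · exact Or.inr hyf)
      ⟨f t, hft, by
        have := fd t (by linarith) (by linarith)
        exact ⟨⟨fS t (by linarith) (by linarith), by simpa [this]⟩, by simpa [this]⟩⟩
      ⟨p, hp, by
        rintro ⟨s, hs, hsp⟩
        have := fd s (by linarith [hs.1]) (by linarith [hs.2])
        rw [hsp, dist_self] at this
        linarith [hs.1]⟩
    apply hy2
    exact ⟨dist p y, ⟨hy1.1.2.le, hy1.2.le⟩, fy y hy1.1.1⟩
  by_cases hc : ∃ a > 0, ∀ y ∈ S, dist p y < a → y ∈ U
  · obtain ⟨a, ha, h'⟩ := hc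
    exact ⟨a, ha, Or.inl h'⟩
  push Not at hc
  obtain ⟨c, hcS, -, hcU⟩ := hc 1 one_pos
  have hcp := h.sub S hS c hcS
  refine ⟨dist p c, dist_pos.2 hcp.2.symm, Or.inr ?_⟩
  intro y hy hyc hyU
  have hyp := h.sub S hS y hy
  obtain ⟨z, hzS, hzy, hzU⟩ := hc (dist p y) (dist_pos.2 hyp.2.symm)
  have hzp := h.sub S hS z hzS
  refine key (dist p z) (dist p c) (dist p y) (dist_pos.2 hzp.2.symm) hzy hyc hcp.1 ?_ ?_ ?_
  · rwa [fy z hzS]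
  · rwa [fy c hcS]
  · rwa [fy y hy]

theorem GStar.local_conn {p : X} {ε : ℝ} {T : Finset (Set X)} (h : GStar p ε T)
    {U : Set X} (hU : IsPreconnected U) (hp : p ∈ U) {r : ℝ} (hr : 0 < r) :
    ∃ δ > 0, δ ≤ r ∧ IsPreconnected (U ∩ Metric.ball p δ) := by
  classical
  have h1 : ∀ S ∈ T, ∃ a > 0, (∀ y ∈ S, dist p y < a → y ∈ U) ∨ (∀ y ∈ S, dist p y < a → y ∉ U) :=
    fun S hS => h.dichotomy hS hU hp
  have h2 : ∃ a > 0, ∀ S ∈ T, (∀ y ∈ S, dist p y < a → y ∈ U) ∨ (∀ y ∈ S, dist p y < a → y ∉ U) := by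
    clear h
    induction T using Finset.induction_on with
    | empty => exact ⟨1, one_pos, by simp⟩
    | insert S T hST ih =>
      obtain ⟨a, ha, ha'⟩ := ih (fun S hS => h1 S (Finset.mem_insert_of_mem hS))
      obtain ⟨b, hb, hb'⟩ := h1 S (Finset.mem_insert_self _ _)
      refine ⟨min a b, lt_min ha hb, ?_⟩
      intro S' hS'
      rcases Finset.mem_insert.1 hS' with rfl | hS'
      · exact hb'.imp (fun H y hy hd => H y hy (hd.trans_le (min_le_right _ _)))
          (fun H y hy hd => H y hy (hd.trans_le (min_le_right _ _)))
      · exact (ha' S' hS').imp (fun H y hy hd => H y hy (hd.trans_le (min_le_left _ _)))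
          (fun H y hy hd => H y hy (hd.trans_le (min_le_left _ _)))
  obtain ⟨a, ha, ha'⟩ := h2
  have hε := h.pos
  refine ⟨min a (min ε r), by positivity, by simp, ?_⟩
  apply isPreconnected_of_forall p
  rintro y ⟨hyU, hyb⟩
  rw [Metric.mem_ball, dist_comm, lt_min_iff, lt_min_iff] at hyb
  by_cases hyp : y = p
  · subst hyp
    exact ⟨{y}, by simp [hp, ha, hε, hr], rfl, rfl, isPreconnected_singleton⟩
  obtain ⟨S, hS, hyS⟩ := h.cover y hyb.2.1 hyp
  have hgood := (ha' S hS).resolve_right (fun H => H y hyS hyb.1 hyU)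
  obtain ⟨f, f0, fS, fd, fy, fi, fc⟩ := h.param hS
  refine ⟨f '' Set.Icc 0 (dist p y), ?_, ⟨0, ⟨le_rfl, dist_nonneg⟩, f0⟩,
    ⟨dist p y, ⟨dist_nonneg, le_rfl⟩, fy y hyS⟩, ?_⟩
  · rintro _ ⟨s, hs, rfl⟩
    have hd := fd s hs.1 (hs.2.trans_lt hyb.2.1)
    constructor
    · rcases hs.1.eq_or_lt with rfl | h0
      · rwa [f0]
      · exact hgood _ (fS s h0 (hs.2.trans_lt hyb.2.1)) (by rw [hd]; exact hs.2.trans_lt hyb.1)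
    · rw [Metric.mem_ball, dist_comm, hd, lt_min_iff, lt_min_iff]
      exact ⟨hs.2.trans_lt hyb.1, hs.2.trans_lt hyb.2.1, hs.2.trans_lt hyb.2.2⟩
  · exact isPreconnected_Icc.image f (fc.mono fun s hs => ⟨hs.1, hs.2.trans_lt hyb.2.1⟩)

theorem comp_near (hg : IsMetricGraph X) {x : X} {U : Set X} (hxU : x ∈ U)
    (hU : IsPreconnected U) {q : X} (hq : q ∈ U \ {x}) {δ : ℝ} (hδ : 0 < δ) :
    ∃ p ∈ connectedComponentIn (U \ {x}) q, dist x p < δ := by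
  by_contra hcon
  push Not at hcon
  set K := connectedComponentIn (U \ {x}) q with hK
  have hKsub : K ⊆ U \ {x} := connectedComponentIn_subset _ _
  have hloc : ∀ p, p ∈ K → ∃ d > 0, U ∩ Metric.ball p d ⊆ K := by
    intro p hp
    obtain ⟨ε, T, hT⟩ := exists_star hg p
    have hpx : 0 < dist x p := dist_pos.2 (fun h => (hKsub hp).2 h.symm)
    obtain ⟨d, hd, hdr, hconn⟩ := hT.local_conn hU (hKsub hp).1 hpx
    refine ⟨d, hd, ?_⟩
    rw [hK, connectedComponentIn_eq hp]
    apply hconn.subset_connectedComponentIn ⟨(hKsub hp).1, Metric.mem_ball_self hd⟩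
    rintro z ⟨hzU, hzb⟩
    refine ⟨hzU, ?_⟩
    rintro rfl
    rw [Metric.mem_ball] at hzb
    linarith
  choose! d hd hdK using hloc
  obtain ⟨y, hyU, hy1, hy2⟩ := hU (⋃ p ∈ K, Metric.ball p (d p)) (closure K)ᶜ
    (isOpen_biUnion fun _ _ => Metric.isOpen_ball) isClosed_closure.isOpen_compl (by
      intro y hy
      by_cases hyK : y ∈ closure K
      · left
        suffices y ∈ K from Set.mem_biUnion (t := fun p => Metric.ball p (d p)) this (Metric.mem_ball_self (hd y this))
        by_cases hyx : y = x
        · subst hyx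
          obtain ⟨z, hz, hz'⟩ := Metric.mem_closure_iff.1 hyK δ hδ
          exact absurd hz' (not_lt.2 (hcon z hz))
        · have hp : IsPreconnected (insert y K) :=
            isPreconnected_connectedComponentIn.subset_closure (Set.subset_insert _ _)
              (Set.insert_subset hyK subset_closure)
          have := hp.subset_connectedComponentIn
            (Set.mem_insert_of_mem _ (mem_connectedComponentIn hq))
            (Set.insert_subset (show y ∈ U \ {x} from ⟨hy, hyx⟩) hKsub)
          exact this (Set.mem_insert _ _)
      · exact Or.inr hyK)
    ⟨q, hq.1, Set.mem_biUnion (t := fun p => Metric.ball p (d p)) (mem_connectedComponentIn hq)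
      (Metric.mem_ball_self (hd q (mem_connectedComponentIn hq)))⟩
    ⟨x, hxU, fun hyK => by
      obtain ⟨z, hz, hz'⟩ := Metric.mem_closure_iff.1 hyK δ hδ
      exact absurd hz' (not_lt.2 (hcon z hz))⟩
  simp only [Set.mem_iUnion] at hy1
  obtain ⟨p, hp, hyp⟩ := hy1
  exact hy2 (subset_closure (hdK p hp ⟨hyU, hyp⟩))

theorem GStar.degree_le (hg : IsMetricGraph X) {x : X} {ε : ℝ} {T : Finset (Set X)}
    (h : GStar x ε T) : degree x ≤ T.card := by
  classical
  apply iSup_le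
  rintro ⟨U, hUn, hUc⟩
  obtain ⟨δ, hδ, hball⟩ := Metric.mem_nhds_iff.1 hUn
  have hxU : x ∈ U := mem_of_mem_nhds hUn
  have hε := h.pos
  have hnear : ∀ c : ConnectedComponents ↥(U \ {x}), ∃ p : ↥(U \ {x}), ∃ S : T,
      (p : ConnectedComponents ↥(U \ {x})) = c ∧ p.1 ∈ S.1 ∧ dist x p.1 < min δ ε := by
    intro c
    obtain ⟨q, rfl⟩ := ConnectedComponents.surjective_coe c
    obtain ⟨p, hp, hpd⟩ := comp_near hg hxU hUc.isPreconnected q.2 (lt_min hδ hε)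
    rw [connectedComponentIn_eq_image q.2] at hp
    obtain ⟨p', hp', rfl⟩ := hp
    obtain ⟨S, hS, hpS⟩ := h.cover p'.1 (hpd.trans_le (min_le_right _ _)) p'.2.2
    exact ⟨p', ⟨S, hS⟩, ConnectedComponents.coe_eq_coe'.2 hp', hpS, hpd⟩
  choose p S hpc hpS hpd using hnear
  have hinj : Function.Injective S := by
    intro c c' hcc
    rw [← hpc c, ← hpc c', ConnectedComponents.coe_eq_coe']
    obtain ⟨f, f0, fS, fd, fy, fi, fc⟩ := h.param (S c).2
    have hpre : IsPreconnected (f '' Set.Ioo 0 (min δ ε)) :=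
      isPreconnected_Ioo.image f (fc.mono fun s hs => ⟨hs.1.le, hs.2.trans_le (min_le_right _ _)⟩)
    have hsub : f '' Set.Ioo 0 (min δ ε) ⊆ U \ {x} := by
      rintro _ ⟨s, hs, rfl⟩
      have hsε := hs.2.trans_le (min_le_right _ _)
      refine ⟨hball ?_, (h.sub _ (S c).2 _ (fS s hs.1 hsε)).2⟩
      rw [Metric.mem_ball, dist_comm, fd s hs.1.le hsε]
      exact hs.2.trans_le (min_le_left _ _)
    have hm : ∀ c'', S c'' = S c → (p c'').1 ∈ f '' Set.Ioo 0 (min δ ε) := by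
      intro c'' hc''
      exact ⟨dist x (p c''), ⟨dist_pos.2 (fun hh => (p c'').2.2 hh.symm), hpd c''⟩,
        fy _ (hc'' ▸ hpS c'')⟩
    have := hpre.subset_connectedComponentIn (hm c' hcc.symm) hsub (hm c rfl)
    rw [connectedComponentIn_eq_image (p c').2] at this
    obtain ⟨z, hz, hz'⟩ := this
    rwa [← Subtype.ext hz']
  calc ENat.card (ConnectedComponents ↥(U \ {x})) ≤ ENat.card T :=
        ENat.card_le_card_of_injective hinj
    _ = T.card := by simp

theorem length_chain (hlen : IsLengthSpace X) (A : Set X) (m : ℕ) :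
    ∀ z ∈ A, ∀ w ∉ A, ∀ η > 0, ∃ u ∈ A, ∃ v ∉ A, dist u v ≤ dist z w / 2 ^ m + η ∧
      dist z u + dist u v + dist v w ≤ dist z w + η := by
  induction m with
  | zero =>
    intro z hz w hw η hη
    exact ⟨z, hz, w, hw, by simp [hη.le], by simp [hη.le]⟩
  | succ m ih =>
    intro z hz w hw η hη
    obtain ⟨u, hu, v, hv, h1, h2⟩ := ih z hz w hw (η / 4) (by positivity)
    obtain ⟨c, hc⟩ := hlen u v (η / 4) (by positivity)
    rw [max_le_iff] at hc
    have e : dist z w / 2 ^ (m + 1) = dist z w / 2 ^ m / 2 := by rw [pow_succ]; field_simp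
    rw [e]
    by_cases hcA : c ∈ A
    · refine ⟨c, hcA, v, hv, by linarith, ?_⟩
      have := dist_triangle z u c
      linarith
    · refine ⟨u, hu, c, hcA, by linarith, ?_⟩
      have := dist_triangle c v w
      linarith

theorem GStar.through (hlen : IsLengthSpace X) {x : X} {ε : ℝ} {T : Finset (Set X)}
    (h : GStar x ε T) {S : Set X} (hS : S ∈ T) {z w : X} (hz : z ∈ S) (hw : w ∉ S)
    (hd : dist x z + dist z w < ε) : dist x z + dist x w ≤ dist z w := by
  obtain ⟨f, f0, fS, fd, fy, fi, fc⟩ := h.param hS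
  obtain ⟨r, hr1, hr2⟩ := exists_between hd
  have hch : ∀ m : ℕ, ∃ u ∈ S, ∃ v ∉ S,
      dist u v ≤ dist z w / 2 ^ m + (r - (dist x z + dist z w)) / 2 ^ m ∧
      dist z u + dist u v + dist v w ≤ dist z w + (r - (dist x z + dist z w)) / 2 ^ m := by
    intro m
    exact length_chain hlen S m z hz w hw _ (div_pos (by linarith) (by positivity))
  choose u hu v hv h1 h2 using hch
  have hcomp : IsCompact (f '' Set.Icc 0 r) :=
    isCompact_Icc.image_of_continuousOn (fc.mono fun s hs => ⟨hs.1, hs.2.trans_lt hr2⟩)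
  have hmem : ∀ m, u m ∈ f '' Set.Icc 0 r := by
    intro m
    refine ⟨dist x (u m), ⟨dist_nonneg, ?_⟩, fy _ (hu m)⟩
    have a1 := dist_triangle x z (u m)
    have a2 := h2 m
    have a3 : (r - (dist x z + dist z w)) / 2 ^ m ≤ r - (dist x z + dist z w) :=
      div_le_self (by linarith) (one_le_pow₀ (by norm_num))
    have a4 : 0 ≤ dist (u m) (v m) := dist_nonneg
    have a5 : 0 ≤ dist (v m) w := dist_nonneg
    linarith
  obtain ⟨a, ha, φ, hφ, hlim⟩ := hcomp.tendsto_subseq hmem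
  have hpow : ∀ c : ℝ, Tendsto (fun m : ℕ => c / 2 ^ m) atTop (𝓝 0) := by
    intro c
    have := (tendsto_pow_atTop_nhds_zero_of_lt_one (r := (1/2 : ℝ)) (by norm_num) (by norm_num)).const_mul c
    simp only [mul_zero] at this
    refine this.congr (fun m => ?_)
    rw [one_div, inv_pow]; rfl
  have hduv : Tendsto (fun m => dist (u (φ m)) (v (φ m))) atTop (𝓝 0) := by
    have hb := ((hpow (dist z w)).add (hpow (r - (dist x z + dist z w)))).comp hφ.tendsto_atTop
    rw [add_zero] at hb
    exact squeeze_zero (fun _ => dist_nonneg) (fun m => h1 (φ m)) hb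
  have hvlim : Tendsto (fun m => v (φ m)) atTop (𝓝 a) := (tendsto_iff_of_dist hduv).1 hlim
  have hax : a = x := by
    obtain ⟨s, hs, rfl⟩ := ha
    rcases hs.1.eq_or_lt with rfl | h0
    · exact f0
    · exfalso
      have := hvlim.eventually ((h.opn S hS).mem_nhds (fS s h0 (hs.2.trans_lt hr2)))
      obtain ⟨m, hm⟩ := this.exists
      exact hv _ hm
  subst hax
  have hL : Tendsto (fun m => dist z (u (φ m)) + dist (u (φ m)) (v (φ m)) + dist (v (φ m)) w)
      atTop (𝓝 (dist z a + 0 + dist a w)) :=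
    ((tendsto_const_nhds.dist hlim).add hduv).add (hvlim.dist tendsto_const_nhds)
  have hR : Tendsto (fun m => dist z w + (r - (dist a z + dist z w)) / 2 ^ (φ m))
      atTop (𝓝 (dist z w + 0)) :=
    tendsto_const_nhds.add ((hpow _).comp hφ.tendsto_atTop)
  have := le_of_tendsto_of_tendsto' hL hR (fun m => h2 (φ m))
  rw [dist_comm a z]
  linarith

theorem haus_image [MeasurableSpace X] [BorelSpace X] {f : ℝ → X} {A B : Set ℝ}
    (fi : ∀ s ∈ A, ∀ t ∈ A, dist (f s) (f t) = dist s t) (hB : B ⊆ A) :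
    (μH[1] : Measure X) (f '' B) = volume B := by
  have hiso : Isometry (fun b : B => f b) :=
    Isometry.of_dist_eq fun s t => fi s (hB s.2) t (hB t.2)
  have hval : Isometry (Subtype.val : B → ℝ) := isometry_subtype_coe
  have e1 : f '' B = (fun b : B => f b) '' Set.univ := by
    ext y; simp
  rw [e1, hiso.hausdorffMeasure_image (Or.inl zero_le_one),
    ← hval.hausdorffMeasure_image (Or.inl zero_le_one), ← hausdorffMeasure_real]
  simp

theorem GStar.haus_leg [MeasurableSpace X] [BorelSpace X] {x : X} {ε : ℝ} {T : Finset (Set X)}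
    (h : GStar x ε T) {S : Set X} (hS : S ∈ T) {δ : ℝ} (hδ : δ ≤ ε) :
    (μH[1] : Measure X) (S ∩ Metric.ball x δ) = ENNReal.ofReal δ := by
  obtain ⟨f, f0, fS, fd, fy, fi, fc⟩ := h.param hS
  have : S ∩ Metric.ball x δ = f '' Set.Ioo 0 δ := by
    ext y
    constructor
    · rintro ⟨hy, hyb⟩
      rw [Metric.mem_ball, dist_comm] at hyb
      exact ⟨dist x y, ⟨dist_pos.2 (h.sub S hS y hy).2.symm, hyb⟩, fy y hy⟩
    · rintro ⟨s, hs, rfl⟩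
      refine ⟨fS s hs.1 (hs.2.trans_le hδ), ?_⟩
      rw [Metric.mem_ball, dist_comm, fd s hs.1.le (hs.2.trans_le hδ)]
      exact hs.2
  rw [this, haus_image fi (fun s hs => ⟨hs.1.le, hs.2.trans_le hδ⟩)]
  simp

theorem genSin_cont (k : ℝ) : Continuous (genSin k) := by
  unfold genSin
  split_ifs <;> fun_prop

theorem genSin_pos (k : ℝ) {r : ℝ} (hr : 0 < r) : ∃ l, 0 < l ∧ l < r ∧ 0 < genSin k l := by
  by_cases hk : 0 < k
  · have hs := Real.sqrt_pos.2 hk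
    refine ⟨min (r / 2) (1 / Real.sqrt k), by positivity, (min_le_left _ _).trans_lt (by linarith), ?_⟩
    simp only [genSin, hk, if_true]
    apply div_pos _ hs
    apply Real.sin_pos_of_pos_of_lt_pi (by positivity)
    have : Real.sqrt k * min (r / 2) (1 / Real.sqrt k) ≤ Real.sqrt k * (1 / Real.sqrt k) := by
      gcongr; exact min_le_right _ _
    rw [mul_one_div_cancel hs.ne'] at this
    linarith [Real.pi_gt_three]
  · refine ⟨r / 2, by positivity, by linarith, ?_⟩
    simp only [genSin, hk, if_false]
    split_ifs with h0
    · positivity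
    · have : 0 < Real.sqrt (-k) := Real.sqrt_pos.2 (by
        have := lt_of_le_of_ne (not_lt.1 hk) h0
        linarith)
      exact div_pos (Real.sinh_pos_iff.2 (by positivity)) this

theorem ratio_lim {k n C m l δ₀ : ℝ} (hn : 1 ≤ n) (hm : 0 ≤ m) (hC : 0 ≤ C)
    (hl : 0 < genSin k l) (hδ₀ : 0 < δ₀)
    (H : ∀ δ, 0 < δ → δ < δ₀ → m * Vkn k n (l - δ) l ≤ C * Vkn k n l (l + δ)) : m ≤ C := by
  set g : ℝ → ℝ := fun t => genSin k t ^ (n - 1) with hg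
  have hgc : Continuous g := (genSin_cont k).rpow_const (fun _ => Or.inr (by linarith))
  have hgl : 0 < g l := Real.rpow_pos_of_pos hl _
  have hc : 0 < 2 * Real.pi ^ (n / 2) / Real.Gamma (n / 2) := by
    have := Real.Gamma_pos_of_pos (s := n / 2) (by linarith)
    have := Real.pi_pos
    positivity
  have key : ∀ η > 0, m * (g l - η) ≤ C * (g l + η) := by
    intro η hη
    obtain ⟨d, hd, hd'⟩ := Metric.continuous_iff.1 hgc l η hη
    set δ := min (d / 2) (δ₀ / 2) with hδ
    have hδp : 0 < δ := by positivity
    have hδd : δ < d := (min_le_left _ _).trans_lt (by linarith)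
    have hδ0 : δ < δ₀ := (min_le_right _ _).trans_lt (by linarith)
    have hH := H δ hδp hδ0
    unfold Vkn at hH
    have hH' : m * (∫ t in (l - δ)..l, g t) ≤ C * ∫ t in l..(l + δ), g t := by
      have : (2 * Real.pi ^ (n / 2) / Real.Gamma (n / 2)) * (m * (∫ t in (l - δ)..l, g t)) ≤
        (2 * Real.pi ^ (n / 2) / Real.Gamma (n / 2)) * (C * ∫ t in l..(l + δ), g t) := by
        linarith
      exact le_of_mul_le_mul_left this hc
    have hb : ∀ t, |t - l| ≤ δ → g l - η ≤ g t ∧ g t ≤ g l + η := by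
      intro t ht
      have := hd' t (by rw [Real.dist_eq]; linarith)
      rw [Real.dist_eq, abs_lt] at this
      constructor <;> linarith
    have i1 : δ * (g l - η) ≤ ∫ t in (l - δ)..l, g t := by
      have := intervalIntegral.integral_mono_on (a := l - δ) (b := l) (f := fun _ => g l - η)
        (g := g) (μ := volume) (by linarith) (by simp) (hgc.intervalIntegrable _ _)
        (fun t ht => (hb t (by rw [abs_le]; constructor <;> linarith [ht.1, ht.2])).1)
      rw [intervalIntegral.integral_const, smul_eq_mul] at this; linarith
    have i2 : ∫ t in l..(l + δ), g t ≤ δ * (g l + η) := by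
      have := intervalIntegral.integral_mono_on (a := l) (b := l + δ) (g := fun _ => g l + η)
        (f := g) (μ := volume) (by linarith) (hgc.intervalIntegrable _ _) (by simp)
        (fun t ht => (hb t (by rw [abs_le]; constructor <;> linarith [ht.1, ht.2])).2)
      rw [intervalIntegral.integral_const, smul_eq_mul] at this; linarith
    have j1 := mul_le_mul_of_nonneg_left i1 hm
    have j2 := mul_le_mul_of_nonneg_left i2 hC
    have : δ * (m * (g l - η)) ≤ δ * (C * (g l + η)) := by linarith
    exact le_of_mul_le_mul_left this hδp
  by_contra hlt
  push Not at hlt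
  have := key ((m - C) * g l / (2 * (m + C))) (by
    apply div_pos (mul_pos (by linarith) hgl); linarith)
  have e : (m + C) * ((m - C) * g l / (2 * (m + C))) = (m - C) * g l / 2 := by
    have : m + C ≠ 0 := by linarith
    field_simp
  have : 0 < (m - C) * g l := mul_pos (by linarith) hgl
  nlinarith

theorem Vkn_nonneg_of {k n a b : ℝ} (hn : 1 ≤ n) (hab : a ≤ b)
    (h : ∀ t ∈ Set.Icc a b, 0 ≤ genSin k t) : 0 ≤ Vkn k n a b := by
  unfold Vkn
  have := Real.Gamma_pos_of_pos (s := n / 2) (by linarith)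
  have := Real.pi_pos
  apply mul_nonneg (by positivity)
  exact intervalIntegral.integral_nonneg hab (fun t ht => Real.rpow_nonneg (h t ht) _)

theorem GStar.main [MeasurableSpace X] [BorelSpace X] (hlen : IsLengthSpace X) {k n C : ℝ}
    (hn : 1 ≤ n) (hC : 1 ≤ C) (hBG : SatisfiesBG (μH[1] : Measure X) k n C)
    {x : X} {ε : ℝ} {T : Finset (Set X)} (h : GStar x ε T) : (T.card : ℝ) ≤ C + 1 := by
  classical
  rcases T.eq_empty_or_nonempty with rfl | ⟨S₀, hS₀⟩
  · simp; linarith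
  obtain ⟨f, f0, fS, fd, fy, fi, fc⟩ := h.param hS₀
  have hε := h.pos
  obtain ⟨l, hl0, hlε, hgl⟩ := genSin_pos k (show 0 < ε / 8 by positivity)
  have hpos : ∀ᶠ t in 𝓝 l, 0 < genSin k t :=
    (genSin_cont k).continuousAt.eventually (lt_mem_nhds hgl)
  obtain ⟨d, hd, hd'⟩ := Metric.eventually_nhds_iff.1 hpos
  set N := T.erase S₀ with hN
  have hcard : (N.card : ℝ) + 1 = T.card := by
    exact_mod_cast Finset.card_erase_add_one hS₀
  suffices (N.card : ℝ) ≤ C by linarith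
  refine ratio_lim (k := k) (n := n) (l := l) (δ₀ := min d l) hn (by positivity) (by linarith)
    hgl (by positivity) ?_
  intro δ hδ hδ'
  obtain ⟨hδd, hδl⟩ := lt_min_iff.1 hδ'
  set x₁ := f l with hx₁
  have hx₁S : x₁ ∈ S₀ := fS l hl0 (by linarith)
  have hx₁d : dist x x₁ = l := fd l hl0.le (by linarith)
  set U : Set X := ⋃ S ∈ N, (S ∩ Metric.ball x δ) with hU
  have hUo : MeasurableSet U := by
    apply IsOpen.measurableSet
    exact isOpen_biUnion fun S hS =>
      (h.opn S (Finset.mem_of_mem_erase hS)).inter Metric.isOpen_ball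
  have hUmem : ∀ z ∈ U, z ∉ S₀ ∧ z ≠ x ∧ dist x z < δ := by
    intro z hz
    simp only [hU, Set.mem_iUnion] at hz
    obtain ⟨S, hS, hzS, hzb⟩ := hz
    rw [hN, Finset.mem_erase] at hS
    refine ⟨Set.disjoint_left.1 (h.disj S hS.2 S₀ hS₀ hS.1) hzS, (h.sub S hS.2 z hzS).2, ?_⟩
    rwa [Metric.mem_ball, dist_comm] at hzb
  have hUμ : (μH[1] : Measure X) U = N.card * ENNReal.ofReal δ := by
    rw [hU, measure_biUnion_finset]
    · rw [Finset.sum_congr rfl (fun S hS => h.haus_leg (Finset.mem_of_mem_erase hS)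
        (show δ ≤ ε by linarith))]
      simp [hN]
    · intro S hS S' hS' hne
      exact (h.disj S (Finset.mem_of_mem_erase hS) S' (Finset.mem_of_mem_erase hS') hne).mono
        Set.inter_subset_left Set.inter_subset_left
    · intro S hS
      exact ((h.opn S (Finset.mem_of_mem_erase hS)).inter Metric.isOpen_ball).measurableSet
  -- distances across `x`
  have hthr : ∀ y ∈ S₀, dist x y < ε / 4 → ∀ z ∉ S₀, dist x z < ε / 4 →
      dist y z = dist x y + dist x z := by
    intro y hy hyd z hz hzd
    have t1 := dist_triangle y x z
    rw [dist_comm y x] at t1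
    exact le_antisymm t1 (h.through hlen hS₀ hy hz (by linarith))
  have hUd : ∀ z ∈ U, dist x₁ z = l + dist x z := by
    intro z hz
    obtain ⟨h1, h2, h3⟩ := hUmem z hz
    rw [hthr x₁ hx₁S (by linarith) z h1 (by linarith), hx₁d]
  have hUann : U ⊆ ann x₁ l (l + δ) := by
    intro z hz
    obtain ⟨h1, h2, h3⟩ := hUmem z hz
    have hzd := hUd z hz
    have hp : 0 < dist x z := dist_pos.2 h2.symm
    refine ⟨by rw [Metric.mem_ball, dist_comm]; linarith, fun hc => ?_⟩
    have := Metric.closure_ball_subset_closedBall hc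
    rw [Metric.mem_closedBall, dist_comm] at this
    linarith
  have hslice : geodSlice x₁ (l - δ) l U ⊆ f '' Set.Ioc 0 δ := by
    rintro y ⟨⟨hy1, hy2⟩, z, hz, hyz⟩
    have hy2' : l - δ ≤ dist x₁ y := by
      by_contra hc
      push Not at hc
      exact hy2 (subset_closure (by rwa [Metric.mem_ball, dist_comm]))
    rw [Metric.mem_ball, dist_comm] at hy1
    obtain ⟨h1, h2, h3⟩ := hUmem z hz
    by_cases hyS : y ∈ S₀
    · refine ⟨dist x y, ?_, fy y hyS⟩
      have hp : 0 < dist x y := dist_pos.2 (h.sub S₀ hS₀ y hyS).2.symm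
      have hi := h.iso S₀ hS₀ x₁ hx₁S y hyS
      rw [hx₁d] at hi
      have htri := dist_triangle x x₁ y
      have e1 := hthr y hyS (by linarith) z h1 (by linarith)
      have e2 := hUd z hz
      refine ⟨hp, ?_⟩
      linarith
    · exfalso
      have := h.through hlen hS₀ hx₁S hyS (by linarith)
      have : 0 ≤ dist x y := dist_nonneg
      linarith
  have hsμ : (μH[1] : Measure X) (geodSlice x₁ (l - δ) l U) ≤ ENNReal.ofReal δ := by
    refine (measure_mono hslice).trans ?_
    rw [haus_image fi (fun s hs => ⟨hs.1.le, by linarith [hs.2]⟩)]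
    simp
  have hbg := hBG x₁ l (l + δ) (l - δ) l (by linarith) (by linarith) (by linarith) (by linarith)
    (by linarith) U hUo hUann
  rw [hUμ] at hbg
  have hV1 : 0 ≤ Vkn k n (l - δ) l := Vkn_nonneg_of hn (by linarith) (fun t ht =>
    (hd' (by rw [Real.dist_eq, abs_lt]; constructor <;> linarith [ht.1, ht.2])).le)
  have hV2 : 0 ≤ Vkn k n l (l + δ) := Vkn_nonneg_of hn (by linarith) (fun t ht =>
    (hd' (by rw [Real.dist_eq, abs_lt]; constructor <;> linarith [ht.1, ht.2])).le)
  have hbg2 : (N.card : ℝ≥0∞) * ENNReal.ofReal δ * ENNReal.ofReal (Vkn k n (l - δ) l) ≤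
      ENNReal.ofReal C * ENNReal.ofReal δ * ENNReal.ofReal (Vkn k n l (l + δ)) :=
    hbg.trans (by gcongr)
  rw [← ENNReal.ofReal_natCast, ← ENNReal.ofReal_mul (by positivity),
    ← ENNReal.ofReal_mul (by positivity), ← ENNReal.ofReal_mul (by linarith),
    ← ENNReal.ofReal_mul (by positivity), ENNReal.ofReal_le_ofReal_iff (by positivity)] at hbg2
  have : δ * (N.card * Vkn k n (l - δ) l) ≤ δ * (C * Vkn k n l (l + δ)) := by linarith
  exact le_of_mul_le_mul_left this hδ

/-- In a metric graph whose 1-dimensional Hausdorff measure satisfies BG(k,n) with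
constant C, every local cut point has degree at most `C + 1`. -/
theorem degree_le_of_metricGraph {X : Type*} [MetricSpace X] [MeasurableSpace X]
    [BorelSpace X] [CompleteSpace X] [LocallyCompactSpace X]
    (hgraph : IsMetricGraph X) (hlen : IsLengthSpace X) (k n C : ℝ) (hn : 1 ≤ n)
    (hC : 1 ≤ C) (hBG : SatisfiesBG (μH[1] : Measure X) k n C)
    (x : X) (hx : IsLocalCutPoint x) :
    (degree x : ℝ≥0∞) ≤ ENNReal.ofReal (C + 1) := by
  obtain ⟨ε, T, hT⟩ := exists_star hgraph x
  have h1 : (degree x : ℝ≥0∞) ≤ ((T.card : ℕ∞) : ℝ≥0∞) :=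
    ENat.toENNReal_le.2 (hT.degree_le hgraph)
  refine h1.trans ?_
  have h2 := hT.main hlen hn hC hBG
  rw [ENat.toENNReal_coe, ← ENNReal.ofReal_natCast]
  exact ENNReal.ofReal_le_ofReal h2
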